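/- The depth function f(k) = depth(S/I^k) has exactly n strict local maxima: for every even integer k with 2 ≤ k ≤ 2n one has depth(S/I^k) > depth(S/I^{k-1}) and depth(S/I^k) > depth(S/I^{k+1}), and these are the only strict local maxima of f. -/

import Mathlib

open MvPolynomial

noncomputable section

/-- The depth of a module `M` with respect to an ideal `J`: the supremum of the lengths of
`M`-regular sequences consisting of elements of `J`. -/
noncomputable def depthWrt {R : Type*} [CommRing R] (J : Ideal R)
    (M : Type*) [AddCommGroup M] [Module R M] : ℕ∞ :=
  sSup {k : ℕ∞ | ∃ rs : List R, (rs.length : ℕ∞) = k ∧ (∀ r ∈ rs, r ∈ J) ∧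
    RingTheory.Sequence.IsRegular M rs}

/-- The type of the `2n+4` variables `a, b, c, d, x₁, y₁, …, xₙ, yₙ`. -/
abbrev Vars (n : ℕ) : Type := Fin 4 ⊕ Fin n ⊕ Fin n

variable (K : Type*) [Field K] (n : ℕ)

/-- The variable `a`. -/
def va : MvPolynomial (Vars n) K := X (Sum.inl 0)
/-- The variable `b`. -/
def vb : MvPolynomial (Vars n) K := X (Sum.inl 1)
/-- The variable `c`. -/
def vc : MvPolynomial (Vars n) K := X (Sum.inl 2)
/-- The variable `d`. -/
def vd : MvPolynomial (Vars n) K := X (Sum.inl 3)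
/-- The variable `xᵢ` (for `i = 0, …, n-1` corresponding to `x₁, …, xₙ`). -/
def vx (i : Fin n) : MvPolynomial (Vars n) K := X (Sum.inr (Sum.inl i))
/-- The variable `yᵢ` (for `i = 0, …, n-1` corresponding to `y₁, …, yₙ`). -/
def vy (i : Fin n) : MvPolynomial (Vars n) K := X (Sum.inr (Sum.inr i))

/-- The monomial ideal
`I = (a⁶, a⁵b, ab⁵, b⁶, a⁴b⁴c, a⁴b⁴d, a⁴x₁y₁², b⁴x₁²y₁, …, a⁴xₙyₙ², b⁴xₙ²yₙ)`. -/
def idealI : Ideal (MvPolynomial (Vars n) K) :=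
  Ideal.span
    ({va K n ^ 6, va K n ^ 5 * vb K n, va K n * vb K n ^ 5, vb K n ^ 6,
      va K n ^ 4 * vb K n ^ 4 * vc K n, va K n ^ 4 * vb K n ^ 4 * vd K n} ∪
     Set.range (fun i => va K n ^ 4 * vx K n i * vy K n i ^ 2) ∪
     Set.range (fun i => vb K n ^ 4 * vx K n i ^ 2 * vy K n i))

/-- The graded maximal ideal `m = (a,b,c,d,x₁,y₁,…,xₙ,yₙ)`. -/
def mMax : Ideal (MvPolynomial (Vars n) K) := Ideal.span (Set.range X)

/-- The depth function `f(k) = depth(S/Iᵏ)`. -/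
def depthFun (k : ℕ) : ℕ∞ :=
  depthWrt (mMax K n) (MvPolynomial (Vars n) K ⧸ (idealI K n) ^ k)

/-!
The powers of `I` are monomial ideals, so depth questions about `S/Iᵏ` become questions about
exponents. Suppose `c * u ∈ Iᵏ` or `d * u ∈ Iᵏ` for a monomial `u ∉ Iᵏ`. The relations between
`a⁶, a⁵b, ab⁵, b⁶` and `a⁴b⁴` force `u` to be divisible by `a⁴b⁴` times a product of `k - 1`
generators of the forms `a⁴xᵢyᵢ²` and `b⁴xᵢ²yᵢ`. No such generator occurs twice, since
`a⁴b⁴(a⁴xᵢyᵢ²)²` is divisible by `a⁶ * a⁶ * b⁴xᵢ²yᵢ`, and symmetrically. Hence `k ≤ 2n + 1`, and for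
`k ≥ 2n + 2` the variables `c, d` form a regular sequence, which turns out to be maximal: by a
theorem of Rees the depth is `2`. If moreover every variable multiplies `u` into `Iᵏ`, then for
each `i` the two generators occur together or not at all, so `k` is odd: the depth is positive for
even `k`. For odd `k ≤ 2n + 1` such a `u` does exist, so the depth is `0`.
-/

section Depth

open RingTheory.Sequence CategoryTheory Abelian Limits Pointwise

universe u v

variable {R : Type u} [CommRing R] {J : Ideal R} {M : Type v} [AddCommGroup M] [Module R M]

theorem depthWrt_congr {N : Type*} [AddCommGroup N] [Module R N] (e : M ≃ₗ[R] N) :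
    depthWrt J M = depthWrt J N := by
  simp only [depthWrt, e.isRegular_congr]

theorem depthWrt_eq_zero_of_forall_smul_eq_zero {v : M} (hv : v ≠ 0) (h : ∀ r ∈ J, r • v = 0) :
    depthWrt J M = 0 := by
  refine nonpos_iff_eq_zero.1 (sSup_le ?_)
  rintro _ ⟨rs, rfl, hmem, hreg⟩
  cases rs with
  | nil => simp
  | cons r rs =>
    rw [isRegular_cons_iff] at hreg
    exact absurd (hreg.1.right_eq_zero_of_smul (h r (hmem r List.mem_cons_self))) hv

theorem smul_top_quotient_eq_top_iff (N : Submodule R M) :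
    J • (⊤ : Submodule R (M ⧸ N)) = ⊤ ↔ N ⊔ J • ⊤ = ⊤ := by
  rw [← Submodule.map_mkQ_eq_top, Submodule.map_smul'', Submodule.map_top, Submodule.range_mkQ]

theorem smul_top_quotSMulTop_ne_top {c : R} (hc : c ∈ J) (hJ : J • (⊤ : Submodule R M) ≠ ⊤) :
    J • (⊤ : Submodule R (QuotSMulTop c M)) ≠ ⊤ := by
  have hle : c • (⊤ : Submodule R M) ≤ J • ⊤ := by
    rw [← Submodule.ideal_span_singleton_smul]
    exact Submodule.smul_mono_left ((Ideal.span_singleton_le_iff_mem J).2 hc)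
  rwa [ne_eq, smul_top_quotient_eq_top_iff, sup_eq_right.2 hle]

theorem smul_top_quotient_ne_top {A : Ideal R} (hA : A ≤ J) (hJ : J ≠ ⊤) :
    J • (⊤ : Submodule R (R ⧸ A)) ≠ ⊤ := by
  rwa [ne_eq, smul_top_quotient_eq_top_iff, smul_eq_mul, Ideal.mul_top, sup_eq_right.2 hA]

section Noetherian

variable [IsNoetherianRing R] [Module.Finite R M]

theorem one_le_depthWrt (hJ : J • (⊤ : Submodule R M) ≠ ⊤)
    (h : ∀ v : M, (∀ r ∈ J, r • v = 0) → v = 0) : 1 ≤ depthWrt J M := by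
  have hhom : Subsingleton ((R ⧸ J) →ₗ[R] M) := by
    refine subsingleton_of_forall_eq 0 fun f => J.linearMap_qext (LinearMap.ext_ring ?_)
    refine h _ fun r hr => ?_
    rw [← map_smul, LinearMap.comp_apply, Submodule.mkQ_apply,
      (Submodule.Quotient.mk_eq_zero J).2 (by simpa using hr), map_zero]
  obtain ⟨r, hr, hreg⟩ := IsSMulRegular.subsingleton_linearMap_iff.1 hhom
  rw [Ideal.annihilator_quotient] at hr
  refine le_sSup ⟨[r], rfl, by simpa using hr, by simpa using hreg, fun htop => hJ ?_⟩
  refine top_unique (htop.le.trans (Submodule.smul_mono_left ?_))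
  rwa [Ideal.ofList_singleton, Ideal.span_singleton_le_iff_mem]

variable [Small.{v} R]

theorem natCast_le_depthWrt_iff_subsingleton_ext (hJ : J • (⊤ : Submodule R M) ≠ ⊤) (m : ℕ) :
    (m : ℕ∞) ≤ depthWrt J M ↔
      ∀ i < m, Subsingleton (Ext (ModuleCat.of R (Shrink.{v} (R ⧸ J))) (ModuleCat.of R M) i) := by
  have rees (l : ℕ) := (ModuleCat.exists_isRegular_tfae J l (ModuleCat.of R M) hJ.lt_top).out 1 3
  refine ⟨fun h i hi => ?_, fun h => ?_⟩
  · obtain ⟨_, ⟨rs, rfl, hmem, hreg⟩, hlt⟩ := lt_sSup_iff.1 ((Nat.cast_lt.2 hi).trans_le h)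
    exact (rees rs.length).2 ⟨rs, rfl, hmem, hreg⟩ i (Nat.cast_lt.1 hlt)
  · obtain ⟨rs, hlen, hmem, hreg⟩ := (rees m).1 h
    exact le_sSup ⟨rs, by rw [hlen], hmem, hreg⟩

theorem natCast_le_depthWrt_iff_exists_isRegular (hJ : J • (⊤ : Submodule R M) ≠ ⊤) (m : ℕ) :
    (m : ℕ∞) ≤ depthWrt J M ↔
      ∃ rs : List R, rs.length = m ∧ (∀ r ∈ rs, r ∈ J) ∧ IsRegular M rs :=
  (natCast_le_depthWrt_iff_subsingleton_ext hJ m).trans <|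
    (ModuleCat.exists_isRegular_tfae J m (ModuleCat.of R M) hJ.lt_top).out 1 3

theorem depthWrt_eq_depthWrt_quotSMulTop_add_one {c : R} (hc : c ∈ J) (hreg : IsSMulRegular M c)
    (hJ : J • (⊤ : Submodule R M) ≠ ⊤) :
    depthWrt J M = depthWrt J (QuotSMulTop c M) + 1 := by
  have hJ' := smul_top_quotSMulTop_ne_top hc hJ
  refine ENat.eq_of_forall_natCast_le_iff fun m => ?_
  cases m with
  | zero => simp
  | succ m =>
    rw [Nat.cast_succ, ENat.add_le_add_iff_right ENat.one_ne_top, ← Nat.cast_succ]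
    refine ⟨fun h => ?_, fun h => ?_⟩
    · rw [natCast_le_depthWrt_iff_subsingleton_ext hJ] at h
      rw [natCast_le_depthWrt_iff_subsingleton_ext hJ']
      intro i hi
      have hzero := AddCommGrpCat.isZero_of_iff_subsingleton.2 (h i (by omega))
      have hzero' := AddCommGrpCat.isZero_of_iff_subsingleton.2 (h (i + 1) (by omega))
      exact AddCommGrpCat.subsingleton_of_isZero <| ShortComplex.Exact.isZero_of_both_zeros
        (Ext.covariant_sequence_exact₃' _
          (IsSMulRegular.smulShortComplex_shortExact (M := ModuleCat.of R M) hreg) i (i + 1) rfl)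
        (hzero.eq_zero_of_src _) (hzero'.eq_zero_of_tgt _)
    · obtain ⟨rs, hlen, hmem, hrs⟩ := (natCast_le_depthWrt_iff_exists_isRegular hJ' m).1 h
      exact (natCast_le_depthWrt_iff_exists_isRegular hJ (m + 1)).2 ⟨c :: rs, by simp [hlen],
        List.forall_mem_cons.2 ⟨hc, hmem⟩, (isRegular_cons_iff M c rs).2 ⟨hreg, hrs⟩⟩

end Noetherian

/-- The isomorphism `(R/A) / c(R/A) ≅ R / (A + (c))`. -/
def quotSMulTopQuotientEquiv (A : Ideal R) (c : R) :
    QuotSMulTop c (R ⧸ A) ≃ₗ[R] R ⧸ (A ⊔ Ideal.span {c}) :=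
  Submodule.quotEquivOfEq _ _ (by
    rw [← A.range_mkQ, ← Submodule.map_top, ← Submodule.map_pointwise_smul,
      ← Submodule.ideal_span_singleton_smul, smul_eq_mul, Ideal.mul_top]) ≪≫ₗ
    Submodule.quotientQuotientEquivQuotientSup A (Ideal.span {c})

theorem depthWrt_quotient_eq_depthWrt_quotient_sup_span_singleton_add_one [IsNoetherianRing R]
    {A : Ideal R} (hA : A ≤ J) (hJ : J ≠ ⊤) {c : R} (hc : c ∈ J)
    (hreg : ∀ p, c * p ∈ A → p ∈ A) :
    depthWrt J (R ⧸ A) = depthWrt J (R ⧸ (A ⊔ Ideal.span {c})) + 1 := by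
  rw [depthWrt_eq_depthWrt_quotSMulTop_add_one hc
    ((isSMulRegular_quotient_iff_mem_of_smul_mem A c).2 hreg) (smul_top_quotient_ne_top hA hJ),
    depthWrt_congr (quotSMulTopQuotientEquiv A c)]

end Depth

section MonomialIdeal

open Finsupp

variable {R σ : Type*} [CommRing R] {s : Set (σ →₀ ℕ)} {hs : IsUpperSet s}

theorem mem_restrictSupportIdeal_iff {p : MvPolynomial σ R} :
    p ∈ restrictSupportIdeal R s hs ↔ ∀ u ∈ p.support, u ∈ s :=
  Iff.rfl

theorem monomial_mem_restrictSupportIdeal_iff [Nontrivial R] {u : σ →₀ ℕ} :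
    monomial u (1 : R) ∈ restrictSupportIdeal R s hs ↔ u ∈ s := by
  classical
  simp [mem_restrictSupportIdeal_iff, support_monomial]

theorem X_mul_mem_restrictSupportIdeal_iff {t : σ} {p : MvPolynomial σ R} :
    X t * p ∈ restrictSupportIdeal R s hs ↔ ∀ u ∈ p.support, u + single t 1 ∈ s := by
  simp [mem_restrictSupportIdeal_iff, mul_comm (X t), support_mul_X]

theorem restrictSupportIdeal_le_idealOfVars (h : 0 ∉ s) :
    restrictSupportIdeal R s hs ≤ idealOfVars σ R := fun p hp => by
  rw [← pow_one (idealOfVars σ R), mem_pow_idealOfVars_iff]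
  exact fun u hu => Nat.one_le_iff_ne_zero.2 fun h0 =>
    h ((degree_eq_zero_iff u).1 h0 ▸ mem_restrictSupportIdeal_iff.1 hp u hu)

theorem idealOfVars_ne_top [Nontrivial R] : idealOfVars σ R ≠ ⊤ := by
  rw [Ideal.ne_top_iff_one, ← pow_one (idealOfVars σ R), mem_pow_idealOfVars_iff]
  simp

theorem isUpperSet_setOf_apply_ne_zero (t : σ) : IsUpperSet {u : σ →₀ ℕ | u t ≠ 0} :=
  fun _ _ huv hu => (Nat.pos_of_ne_zero hu |>.trans_le (huv t)).ne'

theorem restrictSupportIdeal_sup_span_singleton_X (t : σ) :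
    restrictSupportIdeal R s hs ⊔ Ideal.span {X t} =
      restrictSupportIdeal R (s ∪ {u | u t ≠ 0}) (hs.union (isUpperSet_setOf_apply_ne_zero t)) := by
  refine le_antisymm (sup_le (fun p hp u hu => Or.inl (hp hu)) ?_) fun p hp => ?_
  · rw [Ideal.span_singleton_le_iff_mem, ← mul_one (X t), X_mul_mem_restrictSupportIdeal_iff]
    exact fun u _ => Or.inr (by simp)
  · rw [p.as_sum]
    refine Ideal.sum_mem _ fun u hu => ?_
    rcases hp hu with hus | hut
    · exact Ideal.mem_sup_left fun v hv => by
        rwa [Finset.mem_singleton.1 (support_monomial_subset hv)]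
    · exact Ideal.mem_sup_right
        (Ideal.mem_span_singleton.2 (X_dvd_monomial.2 (Or.inr hut)))

section Depth

variable [Nontrivial R]

theorem depthWrt_quotient_restrictSupportIdeal_eq_zero {u : σ →₀ ℕ} (hu : u ∉ s)
    (h : ∀ t, u + single t 1 ∈ s) :
    depthWrt (idealOfVars σ R) (MvPolynomial σ R ⧸ restrictSupportIdeal R s hs) = 0 := by
  refine depthWrt_eq_zero_of_forall_smul_eq_zero
    (v := Submodule.Quotient.mk (monomial u (1 : R))) ?_ ?_
  · rwa [ne_eq, Submodule.Quotient.mk_eq_zero, monomial_mem_restrictSupportIdeal_iff]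
  · refine Ideal.span_le (I := LinearMap.ker (LinearMap.toSpanSingleton _ _ _)).2 ?_
    rintro _ ⟨t, rfl⟩
    refine (Submodule.Quotient.mk_eq_zero _).2 (X_mul_mem_restrictSupportIdeal_iff.2 fun v hv => ?_)
    rw [Finset.mem_singleton.1 (support_monomial_subset hv)]
    exact h t

variable [IsNoetherianRing R] [Finite σ]

theorem one_le_depthWrt_quotient_restrictSupportIdeal (h0 : 0 ∉ s)
    (h : ∀ u, (∀ t, u + single t 1 ∈ s) → u ∈ s) :
    1 ≤ depthWrt (idealOfVars σ R) (MvPolynomial σ R ⧸ restrictSupportIdeal R s hs) := by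
  refine one_le_depthWrt
    (smul_top_quotient_ne_top (restrictSupportIdeal_le_idealOfVars h0) idealOfVars_ne_top)
    fun v hv => ?_
  obtain ⟨p, rfl⟩ := Submodule.Quotient.mk_surjective _ v
  have hXp (t : σ) : X t * p ∈ restrictSupportIdeal R s hs :=
    (Submodule.Quotient.mk_eq_zero _).1 (hv (X t) (Ideal.subset_span ⟨t, rfl⟩))
  exact (Submodule.Quotient.mk_eq_zero _).2 fun u hu =>
    h u fun t => X_mul_mem_restrictSupportIdeal_iff.1 (hXp t) u hu

theorem depthWrt_quotient_restrictSupportIdeal_eq_union_add_one (h0 : 0 ∉ s) (t : σ)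
    (h : ∀ u, u + single t 1 ∈ s → u ∈ s) :
    depthWrt (idealOfVars σ R) (MvPolynomial σ R ⧸ restrictSupportIdeal R s hs) =
      depthWrt (idealOfVars σ R) (MvPolynomial σ R ⧸ restrictSupportIdeal R (s ∪ {u | u t ≠ 0})
        (hs.union (isUpperSet_setOf_apply_ne_zero t))) + 1 := by
  rw [depthWrt_quotient_eq_depthWrt_quotient_sup_span_singleton_add_one
    (restrictSupportIdeal_le_idealOfVars h0) idealOfVars_ne_top (c := X t)
    (Ideal.subset_span ⟨t, rfl⟩)
    fun p hp u hu => h u (X_mul_mem_restrictSupportIdeal_iff.1 hp u hu),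
    restrictSupportIdeal_sup_span_singleton_X]

end Depth

theorem mem_span_range_monomial_pow_iff {ι : Type*} (e : ι → σ →₀ ℕ) (k : ℕ)
    {p : MvPolynomial σ R} :
    p ∈ Ideal.span (Set.range fun i => monomial (e i) (1 : R)) ^ k ↔
      ∀ u ∈ p.support, ∃ m : ι →₀ ℕ, m.degree = k ∧ weight e m ≤ u := by
  have hprod (m : ι →₀ ℕ) :
      (m.prod fun i l => monomial (e i) (1 : R) ^ l) = monomial (weight e m) 1 := by
    simp only [weight_apply, monomial_finsupp_sum_index, monomial_pow, one_pow, C_1,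
      one_mul]
  rw [Ideal.span, Submodule.span_pow, ← Set.image_univ, image_pow_eq_finsuppProd_image]
  simp_rw [hprod]
  rw [← Set.image_image (fun v => monomial v (1 : R))]
  refine mem_ideal_span_monomial_image.trans (forall₂_congr fun u _ => ?_)
  simp

end MonomialIdeal

section PowExponents

open Finsupp

variable {n : ℕ}

/-- The exponents of the generators of `idealI`: of `a⁶, a⁵b, ab⁵, b⁶, a⁴b⁴c, a⁴b⁴d`, then of the
`a⁴xᵢyᵢ²`, then of the `b⁴xᵢ²yᵢ`. -/
def generatorExponent : Fin 6 ⊕ Fin n ⊕ Fin n → Vars n →₀ ℕ :=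
  Sum.elim
    ![single (Sum.inl 0) 6, single (Sum.inl 0) 5 + single (Sum.inl 1) 1,
      single (Sum.inl 0) 1 + single (Sum.inl 1) 5, single (Sum.inl 1) 6,
      single (Sum.inl 0) 4 + single (Sum.inl 1) 4 + single (Sum.inl 2) 1,
      single (Sum.inl 0) 4 + single (Sum.inl 1) 4 + single (Sum.inl 3) 1]
    (Sum.elim
      (fun i => single (Sum.inl 0) 4 + single (Sum.inr (Sum.inl i)) 1 +
        single (Sum.inr (Sum.inr i)) 2)
      (fun i => single (Sum.inl 1) 4 + single (Sum.inr (Sum.inl i)) 2 +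
        single (Sum.inr (Sum.inr i)) 1))

theorem idealI_eq_span_range_monomial {K : Type*} [Field K] :
    idealI K n = Ideal.span (Set.range fun g => monomial (generatorExponent g) (1 : K)) := by
  rw [Set.range_comp' (fun u => monomial u (1 : K)), generatorExponent, Set.Sum.elim_range,
    Set.Sum.elim_range, Set.image_union, Set.image_union, ← Set.union_assoc, idealI]
  congr 2
  · congr 1
    · simp only [Matrix.range_cons, Matrix.range_empty, Set.union_empty, Set.singleton_union,
        Set.image_insert_eq, Set.image_singleton]
      simp [va, vb, vc, vd, X, monomial_pow, monomial_mul]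
    · rw [← Set.range_comp']
      simp [va, vx, vy, X, monomial_pow, monomial_mul]
  · rw [← Set.range_comp']
    simp [vb, vx, vy, X, monomial_pow, monomial_mul]

/-- The product of the `(xᵢyᵢ²) ^ w i` and the `(xᵢ²yᵢ) ^ z i` divides the monomial with
exponent `u`. -/
def XYDvd (u : Vars n →₀ ℕ) (w z : Fin n → ℕ) : Prop :=
  ∀ i, w i + 2 * z i ≤ u (Sum.inr (Sum.inl i)) ∧ 2 * w i + z i ≤ u (Sum.inr (Sum.inr i))

/-- The exponents of the monomials in `idealI ^ k`. Here `p₁, p₂, p₃, p₄` count the factors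
`a⁶, a⁵b, ab⁵, b⁶`, while `q` counts the factors `a⁴b⁴c` and `a⁴b⁴d` together, and `w i`, `z i`
count the factors `a⁴xᵢyᵢ²` and `b⁴xᵢ²yᵢ`. -/
def powExponents (n k : ℕ) : Set (Vars n →₀ ℕ) :=
  {u | ∃ (p₁ p₂ p₃ p₄ q : ℕ) (w z : Fin n → ℕ),
    p₁ + p₂ + p₃ + p₄ + q + ∑ i, w i + ∑ i, z i = k ∧
    6 * p₁ + 5 * p₂ + p₃ + 4 * q + 4 * ∑ i, w i ≤ u (Sum.inl 0) ∧
    p₂ + 5 * p₃ + 6 * p₄ + 4 * q + 4 * ∑ i, z i ≤ u (Sum.inl 1) ∧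
    q ≤ u (Sum.inl 2) + u (Sum.inl 3) ∧ XYDvd u w z}

theorem XYDvd.mono {u v : Vars n →₀ ℕ} (huv : u ≤ v) {w z : Fin n → ℕ} (h : XYDvd u w z) :
    XYDvd v w z :=
  fun i => ⟨(h i).1.trans (huv _), (h i).2.trans (huv _)⟩

theorem isUpperSet_powExponents (k : ℕ) : IsUpperSet (powExponents n k) := by
  rintro u v huv ⟨p₁, p₂, p₃, p₄, q, w, z, hk, ha, hb, hcd, hxy⟩
  exact ⟨p₁, p₂, p₃, p₄, q, w, z, hk, ha.trans (huv _), hb.trans (huv _),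
    hcd.trans (add_le_add (huv _) (huv _)), hxy.mono huv⟩

theorem zero_notMem_powExponents {k : ℕ} (hk : 1 ≤ k) : 0 ∉ powExponents n k := by
  rintro ⟨p₁, p₂, p₃, p₄, q, w, z, hsum, ha, hb, -, -⟩
  simp only [Finsupp.coe_zero, Pi.zero_apply] at ha hb
  omega

theorem weight_generatorExponent_le_iff {m : Fin 6 ⊕ Fin n ⊕ Fin n →₀ ℕ} {u : Vars n →₀ ℕ} :
    weight generatorExponent m ≤ u ↔
      6 * m (Sum.inl 0) + 5 * m (Sum.inl 1) + m (Sum.inl 2) +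
        4 * (m (Sum.inl 4) + m (Sum.inl 5)) + 4 * ∑ i, m (Sum.inr (Sum.inl i)) ≤ u (Sum.inl 0) ∧
      m (Sum.inl 1) + 5 * m (Sum.inl 2) + 6 * m (Sum.inl 3) +
        4 * (m (Sum.inl 4) + m (Sum.inl 5)) + 4 * ∑ i, m (Sum.inr (Sum.inr i)) ≤ u (Sum.inl 1) ∧
      m (Sum.inl 4) ≤ u (Sum.inl 2) ∧ m (Sum.inl 5) ≤ u (Sum.inl 3) ∧
      XYDvd u (fun i => m (Sum.inr (Sum.inl i))) (fun i => m (Sum.inr (Sum.inr i))) := by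
  have hweight (v : Vars n) : weight generatorExponent m v =
      ∑ g, generatorExponent g v * m g := by
    simp [weight_apply, Finsupp.sum_fintype, mul_comm]
  simp only [le_def, hweight, Sum.forall, Fin.forall_fin_succ, XYDvd]
  simp [generatorExponent, Fintype.sum_sum_type, Fin.sum_univ_six, single_apply,
    ← Finset.mul_sum, mul_add, add_assoc, and_assoc, forall_and]

theorem idealI_pow_eq_restrictSupportIdeal {K : Type*} [Field K] (k : ℕ) :
    idealI K n ^ k = restrictSupportIdeal K (powExponents n k) (isUpperSet_powExponents k) := by
  ext p
  rw [idealI_eq_span_range_monomial, mem_span_range_monomial_pow_iff,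
    mem_restrictSupportIdeal_iff]
  refine forall₂_congr fun u _ => ?_
  simp only [weight_generatorExponent_le_iff, degree_eq_sum, Fintype.sum_sum_type,
    Fin.sum_univ_six]
  constructor
  · rintro ⟨m, hk, ha, hb, hc, hd, hxy⟩
    exact ⟨_, _, _, _, m (Sum.inl 4) + m (Sum.inl 5), _, _, by omega, ha, hb, add_le_add hc hd,
      hxy⟩
  · rintro ⟨p₁, p₂, p₃, p₄, q, w, z, hk, ha, hb, hcd, hxy⟩
    refine ⟨equivFunOnFinite.symm (Sum.elim ![p₁, p₂, p₃, p₄, min q (u (Sum.inl 2)),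
      q - u (Sum.inl 2)] (Sum.elim w z)), ?_⟩
    simp only [equivFunOnFinite_symm_apply_apply, Sum.elim_inl, Matrix.cons_val_zero,
      Matrix.cons_val_one, Matrix.cons_val, Sum.elim_inr]
    exact ⟨by omega, by omega, by omega, by omega, by omega, hxy⟩

/-- `a⁴b⁴∏(a⁴xᵢyᵢ²) ^ w i * ∏(b⁴xᵢ²yᵢ) ^ z i` divides the monomial with exponent `u`, where the
two products together have `k - 1` factors. It shows that `c` and `d` multiply this monomial into
`idealI ^ k`. -/
structure IsColonWitness (k : ℕ) (u : Vars n →₀ ℕ) (w z : Fin n → ℕ) : Prop where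
  sum_add_one : ∑ i, w i + ∑ i, z i + 1 = k
  le_a : 4 * ∑ i, w i + 4 ≤ u (Sum.inl 0)
  le_b : 4 * ∑ i, z i + 4 ≤ u (Sum.inl 1)
  xyDvd : XYDvd u w z

theorem exists_isColonWitness {k : ℕ} {u : Vars n →₀ ℕ} {t : Vars n}
    (ht : t = Sum.inl 2 ∨ t = Sum.inl 3) (h : u + single t 1 ∈ powExponents n k)
    (hu : u ∉ powExponents n k) : ∃ w z, IsColonWitness k u w z := by
  obtain ⟨p₁, p₂, p₃, p₄, q, w, z, hk, ha, hb, hcd, hxy⟩ := h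
  have hxy' : XYDvd u w z := fun i => by rcases ht with rfl | rfl <;> simpa using hxy i
  have ha' : 6 * p₁ + 5 * p₂ + p₃ + 4 * q + 4 * ∑ i, w i ≤ u (Sum.inl 0) := by
    rcases ht with rfl | rfl <;> simpa using ha
  have hb' : p₂ + 5 * p₃ + 6 * p₄ + 4 * q + 4 * ∑ i, z i ≤ u (Sum.inl 1) := by
    rcases ht with rfl | rfl <;> simpa using hb
  have hcd' : q ≤ u (Sum.inl 2) + u (Sum.inl 3) + 1 := by
    rcases ht with rfl | rfl <;> simpa [add_assoc, add_comm, add_left_comm] using hcd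
  have not_fit (p₁ p₂ p₃ p₄ q : ℕ) (hk : p₁ + p₂ + p₃ + p₄ + q + ∑ i, w i + ∑ i, z i = k)
      (ha : 6 * p₁ + 5 * p₂ + p₃ + 4 * q + 4 * ∑ i, w i ≤ u (Sum.inl 0))
      (hb : p₂ + 5 * p₃ + 6 * p₄ + 4 * q + 4 * ∑ i, z i ≤ u (Sum.inl 1)) :
      u (Sum.inl 2) + u (Sum.inl 3) < q :=
    lt_of_not_ge fun hcd => hu ⟨p₁, p₂, p₃, p₄, q, w, z, hk, ha, hb, hcd, hxy'⟩
  have hq : u (Sum.inl 2) + u (Sum.inl 3) < q := not_fit p₁ p₂ p₃ p₄ q hk ha' hb'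
  have hq_le : q ≤ 1 := by
    -- `(a⁴b⁴)² = a⁶ * b⁶ * a²b²`
    by_contra!
    have := not_fit (p₁ + 1) p₂ p₃ (p₄ + 1) (q - 2)
    omega
  have hp₁ : p₁ = 0 := by
    -- `a⁶ * a⁴b⁴ = (a⁵b)² * b²`
    by_contra
    have := not_fit (p₁ - 1) (p₂ + 2) p₃ p₄ (q - 1)
    omega
  have hp₂ : p₂ = 0 := by
    -- `a⁵b * a⁴b⁴ = a⁶ * ab⁵ * a²`
    by_contra
    have := not_fit (p₁ + 1) (p₂ - 1) (p₃ + 1) p₄ (q - 1)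
    omega
  have hp₃ : p₃ = 0 := by
    by_contra
    have := not_fit p₁ (p₂ + 1) (p₃ - 1) (p₄ + 1) (q - 1)
    omega
  have hp₄ : p₄ = 0 := by
    by_contra
    have := not_fit p₁ p₂ (p₃ + 2) (p₄ - 1) (q - 1)
    omega
  exact ⟨w, z, by omega, by omega, by omega, hxy'⟩

namespace IsColonWitness

variable {k : ℕ} {u v : Vars n →₀ ℕ} {w z : Fin n → ℕ}

theorem mono (h : IsColonWitness k u w z) (huv : u ≤ v) : IsColonWitness k v w z :=
  ⟨h.sum_add_one, h.le_a.trans (huv _), h.le_b.trans (huv _), h.xyDvd.mono huv⟩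

theorem add_single_inl_mem (h : IsColonWitness k u w z) (t : Fin 4) :
    u + single (Sum.inl t) 1 ∈ powExponents n k := by
  have ht : (u + single (Sum.inl t) 1 : Vars n →₀ ℕ) (Sum.inl t) = u (Sum.inl t) + 1 := by simp
  obtain ⟨hk, ha, hb, hxy⟩ := h.mono (le_self_add : u ≤ u + single (Sum.inl t) 1)
  have hua := h.le_a
  have hub := h.le_b
  obtain rfl | rfl | rfl | rfl : t = 0 ∨ t = 1 ∨ t = 2 ∨ t = 3 := by omega
  · exact ⟨0, 1, 0, 0, 0, w, z, by omega, by omega, by omega, by omega, hxy⟩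
  · exact ⟨0, 0, 1, 0, 0, w, z, by omega, by omega, by omega, by omega, hxy⟩
  · exact ⟨0, 0, 0, 0, 1, w, z, by omega, by omega, by omega, by omega, hxy⟩
  · exact ⟨0, 0, 0, 0, 1, w, z, by omega, by omega, by omega, by omega, hxy⟩

-- Trades `a⁴b⁴(a⁴xᵢyᵢ²) ^ w i * (b⁴xᵢ²yᵢ) ^ z i` for the product
-- `(a⁶) ^ l * (b⁶) ^ l' * (a⁴xᵢyᵢ²) ^ m * (b⁴xᵢ²yᵢ) ^ m'`, which has one more generator.
theorem mem_powExponents_of_exchange (h : IsColonWitness k u w z) (i : Fin n) (l l' m m' : ℕ)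
    (hcount : l + l' + m + m' = w i + z i + 1) (ha : 6 * l + 4 * m ≤ 4 * w i + 4)
    (hb : 6 * l' + 4 * m' ≤ 4 * z i + 4) (hx : m + 2 * m' ≤ u (Sum.inr (Sum.inl i)))
    (hy : 2 * m + m' ≤ u (Sum.inr (Sum.inr i))) : u ∈ powExponents n k := by
  obtain ⟨hk, hua, hub, hxy⟩ := h
  have sum_update (f : Fin n → ℕ) (a : ℕ) :
      ∑ j, Function.update f i a j + f i = ∑ j, f j + a := by
    rw [Finset.sum_update_of_mem (Finset.mem_univ i),
      Finset.sum_eq_add_sum_sdiff_singleton_of_mem (Finset.mem_univ i) f]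
    omega
  have hw := sum_update w m
  have hz := sum_update z m'
  refine ⟨l, 0, 0, l', 0, Function.update w i m, Function.update z i m', by omega, by omega,
    by omega, by omega, fun j => ?_⟩
  rcases eq_or_ne j i with rfl | hj
  · simpa using ⟨hx, hy⟩
  · simpa [hj] using hxy j

theorem le_one_of_notMem (h : IsColonWitness k u w z) (hu : u ∉ powExponents n k) (i : Fin n) :
    w i ≤ 1 ∧ z i ≤ 1 := by
  have hxy := h.xyDvd i
  refine ⟨?_, ?_⟩ <;> by_contra!
  · exact hu (h.mem_powExponents_of_exchange i 2 0 (w i - 2) (z i + 1) (by omega) (by omega)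
      (by omega) (by omega) (by omega))
  · exact hu (h.mem_powExponents_of_exchange i 0 2 (w i + 1) (z i - 2) (by omega) (by omega)
      (by omega) (by omega) (by omega))

theorem le_two_mul_add_one_of_notMem (h : IsColonWitness k u w z) (hu : u ∉ powExponents n k) :
    k ≤ 2 * n + 1 := by
  have hw : ∑ i, w i ≤ n := by
    simpa using Finset.sum_le_card_nsmul Finset.univ w 1 fun i _ => (h.le_one_of_notMem hu i).1
  have hz : ∑ i, z i ≤ n := by
    simpa using Finset.sum_le_card_nsmul Finset.univ z 1 fun i _ => (h.le_one_of_notMem hu i).2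
  have := h.sum_add_one
  omega

end IsColonWitness

theorem XYDvd.of_add_single_inr_inl {u : Vars n →₀ ℕ} {i : Fin n} {w z : Fin n → ℕ}
    (h : XYDvd (u + single (Sum.inr (Sum.inl i)) 1) w z) (hx : 2 ≤ u (Sum.inr (Sum.inl i)))
    (hy : u (Sum.inr (Sum.inr i)) ≤ 1) : XYDvd u w z := fun j => by
  have hj := h j
  rcases eq_or_ne i j with rfl | hij
  · simp only [Finsupp.coe_add, Pi.add_apply, single_eq_same, ne_eq, reduceCtorEq,
      not_false_eq_true, single_eq_of_ne, Sum.inr.injEq, add_zero] at hj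
    omega
  · simpa [hij] using hj

theorem XYDvd.of_add_single_inr_inr {u : Vars n →₀ ℕ} {i : Fin n} {w z : Fin n → ℕ}
    (h : XYDvd (u + single (Sum.inr (Sum.inr i)) 1) w z) (hx : u (Sum.inr (Sum.inl i)) ≤ 1)
    (hy : 2 ≤ u (Sum.inr (Sum.inr i))) : XYDvd u w z := fun j => by
  have hj := h j
  rcases eq_or_ne i j with rfl | hij
  · simp only [Finsupp.coe_add, Pi.add_apply, single_eq_same, ne_eq, reduceCtorEq,
      not_false_eq_true, single_eq_of_ne, Sum.inr.injEq, add_zero] at hj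
    omega
  · simpa [hij] using hj

theorem mem_powExponents_of_add_single_inr_mem {k : ℕ} {u : Vars n →₀ ℕ} {t : Fin n ⊕ Fin n}
    (h : u + single (Sum.inr t) 1 ∈ powExponents n k)
    (ht : ∀ w z, XYDvd (u + single (Sum.inr t) 1) w z → XYDvd u w z) : u ∈ powExponents n k := by
  obtain ⟨p₁, p₂, p₃, p₄, q, w, z, hk, ha, hb, hcd, hxy⟩ := h
  exact ⟨p₁, p₂, p₃, p₄, q, w, z, hk, by simpa using ha, by simpa using hb, by simpa using hcd,
    ht w z hxy⟩

theorem IsColonWitness.eq_of_notMem {k : ℕ} {u : Vars n →₀ ℕ} {w z : Fin n → ℕ}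
    (h : IsColonWitness k u w z) (hu : u ∉ powExponents n k)
    (hsocle : ∀ t, u + single t 1 ∈ powExponents n k) (i : Fin n) : w i = z i := by
  have hle := h.le_one_of_notMem hu i
  have hxy := h.xyDvd i
  by_contra hne
  obtain ⟨hw, hz⟩ | ⟨hw, hz⟩ : (w i = 1 ∧ z i = 0) ∨ (w i = 0 ∧ z i = 1) := by omega
  · rcases le_or_gt 2 (u (Sum.inr (Sum.inl i))) with hx | hx
    · exact hu (h.mem_powExponents_of_exchange i 1 0 0 1 (by omega) (by omega) (by omega)
        (by omega) (by omega))
    · exact hu (mem_powExponents_of_add_single_inr_mem (hsocle (Sum.inr (Sum.inr i)))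
        fun _ _ hdvd => hdvd.of_add_single_inr_inr (by omega) (by omega))
  · rcases le_or_gt 2 (u (Sum.inr (Sum.inr i))) with hy | hy
    · exact hu (h.mem_powExponents_of_exchange i 0 1 1 0 (by omega) (by omega) (by omega)
        (by omega) (by omega))
    · exact hu (mem_powExponents_of_add_single_inr_mem (hsocle (Sum.inr (Sum.inl i)))
        fun _ _ hdvd => hdvd.of_add_single_inr_inl (by omega) (by omega))

theorem mem_powExponents_of_forall_add_single_mem_of_even {k : ℕ} (hk : Even k)
    {u : Vars n →₀ ℕ} (h : ∀ t, u + single t 1 ∈ powExponents n k) : u ∈ powExponents n k := by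
  by_contra hu
  obtain ⟨w, z, hwz⟩ := exists_isColonWitness (Or.inl rfl) (h (Sum.inl 2)) hu
  have hsum : ∑ i, w i = ∑ i, z i := Finset.sum_congr rfl fun i _ => hwz.eq_of_notMem hu h i
  have := hwz.sum_add_one
  obtain ⟨m, rfl⟩ := hk
  omega

theorem mem_powExponents_of_add_single_mem {k : ℕ} (hk : 2 * n + 2 ≤ k) {t : Vars n}
    (ht : t = Sum.inl 2 ∨ t = Sum.inl 3) {u : Vars n →₀ ℕ}
    (h : u + single t 1 ∈ powExponents n k) : u ∈ powExponents n k := by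
  by_contra hu
  obtain ⟨w, z, hwz⟩ := exists_isColonWitness ht h hu
  have := hwz.le_two_mul_add_one_of_notMem hu
  omega

end PowExponents

section Socle

open Finsupp

variable {n : ℕ}

/-- The exponent of `a ^ α * b ^ β * ∏ xᵢ ^ r i * yᵢ ^ r i`. -/
def abxyExponent (α β : ℕ) (r : Fin n → ℕ) : Vars n →₀ ℕ :=
  equivFunOnFinite.symm (Sum.elim ![α, β, 0, 0] (Sum.elim r r))

@[simp]
theorem abxyExponent_inl_zero (α β : ℕ) (r : Fin n → ℕ) :
    abxyExponent α β r (Sum.inl 0) = α :=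
  rfl

@[simp]
theorem abxyExponent_inl_one (α β : ℕ) (r : Fin n → ℕ) :
    abxyExponent α β r (Sum.inl 1) = β :=
  rfl

@[simp]
theorem abxyExponent_inl_two (α β : ℕ) (r : Fin n → ℕ) :
    abxyExponent α β r (Sum.inl 2) = 0 :=
  rfl

@[simp]
theorem abxyExponent_inl_three (α β : ℕ) (r : Fin n → ℕ) :
    abxyExponent α β r (Sum.inl 3) = 0 :=
  rfl

@[simp]
theorem abxyExponent_inr_inl (α β : ℕ) (r : Fin n → ℕ) (i : Fin n) :
    abxyExponent α β r (Sum.inr (Sum.inl i)) = r i :=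
  rfl

@[simp]
theorem abxyExponent_inr_inr (α β : ℕ) (r : Fin n → ℕ) (i : Fin n) :
    abxyExponent α β r (Sum.inr (Sum.inr i)) = r i :=
  rfl

/-- The exponent of a monomial in the socle of `S/I ^ k` for `k = 2 * #T + 1`, namely
`a⁴b⁴∏_{i ∈ T}(a⁴xᵢyᵢ²)(b⁴xᵢ²yᵢ) * ∏_{i ∉ T} xᵢyᵢ`. -/
def oddSocleExponent (T : Finset (Fin n)) : Vars n →₀ ℕ :=
  abxyExponent (4 * T.card + 4) (4 * T.card + 4) fun i => if i ∈ T then 3 else 1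

theorem oddSocleExponent_notMem (T : Finset (Fin n)) :
    oddSocleExponent T ∉ powExponents n (2 * T.card + 1) := by
  rintro ⟨p₁, p₂, p₃, p₄, q, w, z, hk, ha, hb, hcd, hxy⟩
  simp only [oddSocleExponent, XYDvd, abxyExponent_inl_zero, abxyExponent_inl_one,
    abxyExponent_inl_two, abxyExponent_inl_three, abxyExponent_inr_inl,
    abxyExponent_inr_inr] at ha hb hcd hxy
  have sum_le (f : Fin n → ℕ) (hf : ∀ i, f i ≤ if i ∈ T then 1 else 0) : ∑ i, f i ≤ T.card :=
    (Finset.sum_le_sum fun i _ => hf i).trans_eq (by simp)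
  have hw : ∑ i, w i ≤ T.card := sum_le w fun i => by
    have := hxy i
    split_ifs at * <;> omega
  have hz : ∑ i, z i ≤ T.card := sum_le z fun i => by
    have := hxy i
    split_ifs at * <;> omega
  -- Every factor `a⁶, a⁵b, ab⁵, b⁶` adds `6` to the sum of `ha` and `hb`, so there are at most two.
  obtain ⟨hw', hz'⟩ | ⟨hw', hz'⟩ | ⟨hw', hz'⟩ :
      (∑ i, w i = T.card ∧ ∑ i, z i = T.card) ∨ (∑ i, w i + 1 = T.card ∧ ∑ i, z i = T.card) ∨
        (∑ i, w i = T.card ∧ ∑ i, z i + 1 = T.card) := by omega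
  all_goals
    by_cases hp₁ : p₁ = 0 <;> by_cases hp₄ : p₄ = 0 <;> omega

theorem isColonWitness_oddSocleExponent (T : Finset (Fin n)) :
    IsColonWitness (2 * T.card + 1) (oddSocleExponent T) (fun i => if i ∈ T then 1 else 0)
      (fun i => if i ∈ T then 1 else 0) where
  sum_add_one := by simp [two_mul]
  le_a := by simp [oddSocleExponent]
  le_b := by simp [oddSocleExponent]
  xyDvd i := by by_cases hi : i ∈ T <;> simp [oddSocleExponent, hi]

theorem oddSocleExponent_add_single_mem (T : Finset (Fin n)) (t : Vars n) :
    oddSocleExponent T + single t 1 ∈ powExponents n (2 * T.card + 1) := by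
  have h := (isColonWitness_oddSocleExponent T).mono
    (le_self_add : _ ≤ oddSocleExponent T + single t 1)
  rcases t with t | i | i
  · exact (isColonWitness_oddSocleExponent T).add_single_inl_mem t
  · by_cases hi : i ∈ T
    · exact h.mem_powExponents_of_exchange i 1 0 0 2 (by simp [hi]) (by simp [hi]) (by simp [hi])
        (by simp [oddSocleExponent, hi]) (by simp [oddSocleExponent, hi])
    · exact h.mem_powExponents_of_exchange i 0 0 0 1 (by simp [hi]) (by simp [hi]) (by simp [hi])
        (by simp [oddSocleExponent, hi]) (by simp [oddSocleExponent, hi])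
  · by_cases hi : i ∈ T
    · exact h.mem_powExponents_of_exchange i 0 1 2 0 (by simp [hi]) (by simp [hi]) (by simp [hi])
        (by simp [oddSocleExponent, hi]) (by simp [oddSocleExponent, hi])
    · exact h.mem_powExponents_of_exchange i 0 0 1 0 (by simp [hi]) (by simp [hi]) (by simp [hi])
        (by simp [oddSocleExponent, hi]) (by simp [oddSocleExponent, hi])

theorem abxyExponent_one_notMem (m : ℕ) :
    abxyExponent (6 * m + 6) 5 (1 : Fin n → ℕ) ∉ powExponents n (m + 2) := by
  rintro ⟨p₁, p₂, p₃, p₄, q, w, z, hsum, ha, hb, hcd, hxy⟩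
  simp only [XYDvd, abxyExponent_inl_zero, abxyExponent_inl_one, abxyExponent_inl_two,
    abxyExponent_inl_three, abxyExponent_inr_inl, abxyExponent_inr_inr,
    Pi.one_apply] at ha hb hcd hxy
  have hw : ∑ i, w i = 0 := Finset.sum_eq_zero fun i _ => by have := hxy i; omega
  have hz : ∑ i, z i = 0 := Finset.sum_eq_zero fun i _ => by have := hxy i; omega
  omega

theorem abxyExponent_one_add_single_mem (m : ℕ) {t : Vars n} (hc : t ≠ Sum.inl 2)
    (hd : t ≠ Sum.inl 3) :
    abxyExponent (6 * m + 6) 5 (1 : Fin n → ℕ) + single t 1 ∈ powExponents n (m + 2) := by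
  rcases t with t | i | i
  · obtain rfl | rfl : t = 0 ∨ t = 1 := by
      have := Sum.inl_injective.ne_iff.1 hc
      have := Sum.inl_injective.ne_iff.1 hd
      omega
    · exact ⟨m + 1, 0, 1, 0, 0, 0, 0, by simp, by simp [mul_add], by simp, by simp,
        fun i => by simp⟩
    · exact ⟨m + 1, 0, 0, 1, 0, 0, 0, by simp, by simp [mul_add], by simp, by simp,
        fun i => by simp⟩
  · refine ⟨m + 1, 0, 0, 0, 0, 0, Pi.single i 1, by simp, by simp [mul_add], by simp, by simp,
      fun j => ?_⟩
    rcases eq_or_ne j i with rfl | hj <;> simp [*]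
  · refine ⟨m, 0, 1, 0, 0, Pi.single i 1, 0, by simp, by simp [add_assoc], by simp, by simp,
      fun j => ?_⟩
    rcases eq_or_ne j i with rfl | hj <;> simp [*]

end Socle

section DepthFun

open Finsupp

variable {K : Type*} [Field K] {n : ℕ}

theorem depthFun_eq_depthWrt (k : ℕ) :
    depthFun K n k = depthWrt (idealOfVars (Vars n) K) (MvPolynomial (Vars n) K ⧸
      restrictSupportIdeal K (powExponents n k) (isUpperSet_powExponents k)) := by
  rw [depthFun, idealI_pow_eq_restrictSupportIdeal]
  rfl

theorem depthFun_two_mul_add_one {j : ℕ} (hj : j ≤ n) : depthFun K n (2 * j + 1) = 0 := by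
  obtain ⟨T, -, rfl⟩ := Finset.exists_subset_card_eq (s := (Finset.univ : Finset (Fin n)))
    (hj.trans_eq (Finset.card_fin n).symm)
  rw [depthFun_eq_depthWrt]
  exact depthWrt_quotient_restrictSupportIdeal_eq_zero (oddSocleExponent_notMem T)
    (oddSocleExponent_add_single_mem T)

theorem one_le_depthFun_of_even {k : ℕ} (hk : 1 ≤ k) (heven : Even k) : 1 ≤ depthFun K n k := by
  rw [depthFun_eq_depthWrt]
  exact one_le_depthWrt_quotient_restrictSupportIdeal (zero_notMem_powExponents hk)
    fun _ => mem_powExponents_of_forall_add_single_mem_of_even heven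

theorem depthFun_eq_two {k : ℕ} (hk : 2 * n + 2 ≤ k) : depthFun K n k = 2 := by
  obtain ⟨m, rfl⟩ := Nat.exists_eq_add_of_le' (show 2 ≤ k by omega)
  have hc (u : Vars n →₀ ℕ) (h : u + single (Sum.inl 2) 1 ∈ powExponents n (m + 2)) :
      u ∈ powExponents n (m + 2) := mem_powExponents_of_add_single_mem hk (Or.inl rfl) h
  have hd (u : Vars n →₀ ℕ)
      (h : u + single (Sum.inl 3) 1 ∈ powExponents n (m + 2) ∪ {u | u (Sum.inl 2) ≠ 0}) :
      u ∈ powExponents n (m + 2) ∪ {u | u (Sum.inl 2) ≠ 0} :=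
    h.imp (mem_powExponents_of_add_single_mem hk (Or.inr rfl)) (by simp)
  have h0 : 0 ∉ powExponents n (m + 2) := zero_notMem_powExponents (by omega)
  rw [depthFun_eq_depthWrt, depthWrt_quotient_restrictSupportIdeal_eq_union_add_one h0 _ hc,
    depthWrt_quotient_restrictSupportIdeal_eq_union_add_one (by simp [h0]) _ hd,
    depthWrt_quotient_restrictSupportIdeal_eq_zero
      (u := abxyExponent (6 * m + 6) 5 1)]
  · rfl
  · simpa using abxyExponent_one_notMem m
  · intro t
    by_cases htd : t = Sum.inl 3
    · exact Or.inr (by simp [htd])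
    by_cases htc : t = Sum.inl 2
    · exact Or.inl (Or.inr (by simp [htc]))
    exact Or.inl (Or.inl (abxyExponent_one_add_single_mem m htc htd))

end DepthFun

/-- The depth function `f(k) = depth(S/Iᵏ)` has exactly `n` strict local maxima:
an integer `k ≥ 2` satisfies `f(k) > f(k-1)` and `f(k) > f(k+1)` if and only if `k` is
even and `2 ≤ k ≤ 2n`. -/
theorem strict_local_maxima_characterization (k : ℕ) (hk : 2 ≤ k) :
    (depthFun K n (k - 1) < depthFun K n k ∧ depthFun K n (k + 1) < depthFun K n k) ↔
    (Even k ∧ k ≤ 2 * n) := by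
  constructor
  · rintro ⟨hpred, hsucc⟩
    have hlt : k < 2 * n + 2 := by
      by_contra! hle
      rw [depthFun_eq_two hle, depthFun_eq_two (by omega)] at hsucc
      exact hsucc.false
    obtain ⟨j, rfl⟩ | ⟨j, rfl⟩ := k.even_or_odd
    · exact ⟨⟨j, rfl⟩, by omega⟩
    · rw [depthFun_two_mul_add_one (by omega)] at hpred
      exact absurd hpred not_lt_zero
  · rintro ⟨heven, hle⟩
    have hpos : 0 < depthFun K n k :=
      zero_lt_one.trans_le (one_le_depthFun_of_even (by omega) heven)
    obtain ⟨j, rfl⟩ := heven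
    rw [show j + j - 1 = 2 * (j - 1) + 1 by omega, show j + j + 1 = 2 * j + 1 by omega,
      depthFun_two_mul_add_one (by omega), depthFun_two_mul_add_one (by omega)]
    exact ⟨hpos, hpos⟩
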